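/- Let V be a real vector space with a nondegenerate symmetric bilinear form of signature (s₊, s₋) with s₊ ≥ 3 and s₋ ≥ 1, let L ⊂ V be a lattice (full-rank ℤ-submodule on which the form is integral), Γ a finite-index subgroup of O(L), and l ∈ L a nonzero vector. Then the union over γ ∈ Γ of the sets Gr₊₊((γl)^⊥) is dense in Gr₊₊(V), the Grassmannian of positive-definite 2-planes in V. -/

import Mathlib

open Matrix

variable {n : ℕ}

/-- The real bilinear form on `ℝⁿ` with Gram matrix `B`. -/
def qForm (B : Matrix (Fin n) (Fin n) ℝ) (x y : Fin n → ℝ) : ℝ :=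
  x ⬝ᵥ B.mulVec y

/-- The real vector associated to an integer vector. -/
def intVec (v : Fin n → ℤ) : Fin n → ℝ := fun i => (v i : ℝ)

/-- A pair of vectors spans a positive 2-plane: the form is positive on every
nonzero linear combination (this forces linear independence). -/
def SpansPosPlane (B : Matrix (Fin n) (Fin n) ℝ) (p : (Fin n → ℝ) × (Fin n → ℝ)) :
    Prop :=
  ∀ a b : ℝ, ¬(a = 0 ∧ b = 0) →
    0 < qForm B (a • p.1 + b • p.2) (a • p.1 + b • p.2)

/-!
Write `A = u ∧ v` for two integral vectors `u`, `v` of discriminant `D > 0`. Since `A³ = D A`, the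
solutions of the Pell equation `x² - D y² = 1` act by integral isometries `1 + 2xy A + 2y² A²`.
Divided by `2y²`, the iterates of one of them converge to `A² + √D A`, which maps every vector into
an isotropic line of the plane of `u` and `v`. When `D` is a square, so that there is no such
isometry, the isotropic line is spanned by an integral vector `e`; the isometries for `e` and an
orthogonal `f`, where `D = 0`, then converge to that line. As every isotropic line is a limit of
lines obtained this way, the lines through the points of the orbit accumulate at all of them.

A positive plane is orthogonal to some isotropic `x ≠ 0`, because the form is indefinite on its
orthogonal. Projecting the plane onto the hyperplanes orthogonal to orbit points whose lines
approach that of `x` moves it by arbitrarily little.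
-/

section WedgeEnd

variable {R M : Type*} [CommRing R] [AddCommGroup M] [Module R M]
  {Q : LinearMap.BilinForm R M}

/-- The endomorphism `u ∧ v : w ↦ Q(u, w) v - Q(v, w) u`, an infinitesimal isometry of a symmetric
form `Q` supported on the plane spanned by `u` and `v`. -/
def wedgeEnd (Q : LinearMap.BilinForm R M) (u v : M) : Module.End R M :=
  (Q u).smulRight v - (Q v).smulRight u

/-- The discriminant `Q(u, v)² - Q(u, u) Q(v, v)` of `Q` on the pair `(u, v)`, that is, minus its
Gram determinant. -/
def gramDisc (Q : LinearMap.BilinForm R M) (u v : M) : R :=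
  Q u v ^ 2 - Q u u * Q v v

/-- The isometry attached to a solution of the Pell equation `x² - D y² = 1`, where `D` is the
discriminant of `(u, v)`: it is `(x + y (u ∧ v))²` on the plane of `u` and `v`, where
`(u ∧ v)² = D`, and the identity on the orthogonal of that plane. -/
def pellEnd (Q : LinearMap.BilinForm R M) (u v : M) (x y : R) : Module.End R M :=
  1 + (2 * x * y) • wedgeEnd Q u v + (2 * y ^ 2) • wedgeEnd Q u v ^ 2

theorem wedgeEnd_apply (u v w : M) : wedgeEnd Q u v w = Q u w • v - Q v w • u := rfl

theorem pellEnd_apply (u v : M) (x y : R) (w : M) :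
    pellEnd Q u v x y w =
      w + (2 * x * y) • wedgeEnd Q u v w + (2 * y ^ 2) • wedgeEnd Q u v (wedgeEnd Q u v w) := rfl

theorem gramDisc_comm (hQ : Q.IsSymm) (u v : M) : gramDisc Q u v = gramDisc Q v u := by
  have huv : Q u v = Q v u := hQ.eq u v
  simp only [gramDisc, huv, mul_comm]

theorem gramDisc_smul_smul (u v : M) (c : R) :
    gramDisc Q (c • u) (c • v) = (c ^ 2) ^ 2 * gramDisc Q u v := by
  simp only [gramDisc, map_smul, LinearMap.smul_apply, smul_eq_mul]
  ring

theorem wedgeEnd_skew (hQ : Q.IsSymm) (u v w z : M) :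
    Q (wedgeEnd Q u v w) z = -Q w (wedgeEnd Q u v z) := by
  have hu : Q w u = Q u w := hQ.eq w u
  have hv : Q w v = Q v w := hQ.eq w v
  simp only [wedgeEnd_apply, map_sub, map_smul, LinearMap.sub_apply, LinearMap.smul_apply,
    smul_eq_mul, hu, hv]
  ring

theorem wedgeEnd_cube_apply (hQ : Q.IsSymm) (u v w : M) :
    wedgeEnd Q u v (wedgeEnd Q u v (wedgeEnd Q u v w)) = gramDisc Q u v • wedgeEnd Q u v w := by
  have huv : Q v u = Q u v := hQ.eq v u
  simp only [wedgeEnd_apply, gramDisc, map_sub, map_smul, huv]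
  module

theorem wedgeEnd_sq_apply_of_isotropic (hQ : Q.IsSymm) {e f : M} (he : Q e e = 0)
    (hef : Q e f = 0) (w : M) :
    wedgeEnd Q e f (wedgeEnd Q e f w) = -(Q f f * Q e w) • e := by
  have hfe : Q f e = 0 := (hQ.eq f e).trans hef
  simp only [wedgeEnd_apply, map_sub, map_smul, he, hef, hfe]
  module

theorem pellEnd_one_zero (u v : M) : pellEnd Q u v 1 0 = 1 := by
  simp [pellEnd]

theorem pellEnd_mul (hQ : Q.IsSymm) (u v : M) {x y x' y' : R}
    (h : x ^ 2 - gramDisc Q u v * y ^ 2 = 1) (h' : x' ^ 2 - gramDisc Q u v * y' ^ 2 = 1) :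
    pellEnd Q u v x y * pellEnd Q u v x' y' =
      pellEnd Q u v (x * x' + gramDisc Q u v * (y * y')) (x * y' + y * x') := by
  ext w
  simp only [Module.End.mul_apply, pellEnd_apply, map_add, map_smul, wedgeEnd_cube_apply hQ]
  linear_combination (norm := module)
    (-(2 * x' * y') * h - (2 * x * y) * h') • wedgeEnd Q u v w +
    (-(2 * y' ^ 2) * h - (2 * y ^ 2) * h') • wedgeEnd Q u v (wedgeEnd Q u v w)

theorem pellEnd_isometry (hQ : Q.IsSymm) (u v : M) {x y : R}
    (h : x ^ 2 - gramDisc Q u v * y ^ 2 = 1) (w z : M) :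
    Q (pellEnd Q u v x y w) (pellEnd Q u v x y z) = Q w z := by
  simp only [pellEnd_apply, map_add, map_smul, LinearMap.add_apply, LinearMap.smul_apply,
    smul_eq_mul, wedgeEnd_skew hQ, wedgeEnd_cube_apply hQ]
  linear_combination -(4 * y ^ 2 * Q w (wedgeEnd Q u v (wedgeEnd Q u v z))) * h

end WedgeEnd

section Isotropic

variable {V : Type*} [AddCommGroup V] [Module ℝ V] {Q : LinearMap.BilinForm ℝ V}

/-- An isotropic vector of the plane spanned by `u` and `v`, for a pair of discriminant `D ≥ 0`.
It is an eigenvector of `u ∧ v` with eigenvalue `√D`. -/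
noncomputable def isotropicVec (Q : LinearMap.BilinForm ℝ V) (u v : V) : V :=
  (Q u v + √(gramDisc Q u v)) • v - Q v v • u

theorem isotropicVec_isotropic (hQ : Q.IsSymm) {u v : V} (h : 0 ≤ gramDisc Q u v) :
    Q (isotropicVec Q u v) (isotropicVec Q u v) = 0 := by
  have huv : Q v u = Q u v := hQ.eq v u
  have hs := Real.sq_sqrt h
  simp only [isotropicVec, map_sub, map_smul, LinearMap.sub_apply, LinearMap.smul_apply,
    smul_eq_mul, huv]
  generalize √(gramDisc Q u v) = s at *
  rw [gramDisc] at hs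
  linear_combination Q v v * hs

theorem isotropicVec_smul_smul (u v : V) (c : ℝ) :
    isotropicVec Q (c • u) (c • v) = c ^ 3 • isotropicVec Q u v := by
  have hs : √(gramDisc Q (c • u) (c • v)) = c ^ 2 * √(gramDisc Q u v) := by
    rw [gramDisc_smul_smul, Real.sqrt_mul (by positivity), Real.sqrt_sq (by positivity)]
  simp only [isotropicVec, hs, map_smul, LinearMap.smul_apply, smul_eq_mul]
  module

theorem sqrt_gramDisc_of_isotropic {u x : V} (hx : Q x x = 0) (hux : 0 ≤ Q u x) :
    √(gramDisc Q u x) = Q u x := by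
  rw [gramDisc, hx, mul_zero, sub_zero, Real.sqrt_sq hux]

theorem isotropicVec_of_isotropic_right {u x : V} (hx : Q x x = 0) (hux : 0 ≤ Q u x) :
    isotropicVec Q u x = (2 * Q u x) • x := by
  rw [isotropicVec, sqrt_gramDisc_of_isotropic hx hux, hx, zero_smul, sub_zero, two_mul]

theorem isotropicVec_of_isotropic_left (hQ : Q.IsSymm) {u x : V} (hx : Q x x = 0)
    (hux : 0 ≤ Q u x) : isotropicVec Q x u = (2 * Q u x) • u - Q u u • x := by
  have hxu : Q x u = Q u x := hQ.eq x u
  rw [isotropicVec, gramDisc_comm hQ, sqrt_gramDisc_of_isotropic hx hux, hxu, two_mul]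

/-- On the plane of `u` and `v` the endomorphism `A ^ 2 + √D A`, where `A = u ∧ v`, kills the
eigenline of `A` for `-√D`, whence its rank is at most one. -/
theorem smul_wedgeEnd_sq_add (hQ : Q.IsSymm) {u v : V} (h : 0 ≤ gramDisc Q u v) (w : V) :
    (Q u v + √(gramDisc Q u v)) •
        (wedgeEnd Q u v (wedgeEnd Q u v w) + √(gramDisc Q u v) • wedgeEnd Q u v w) =
      Q (isotropicVec Q v u) w • isotropicVec Q u v := by
  have huv : Q v u = Q u v := hQ.eq v u
  have hs := Real.sq_sqrt h
  simp only [isotropicVec, gramDisc_comm hQ v u, wedgeEnd_apply, map_sub, map_smul,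
    LinearMap.sub_apply, LinearMap.smul_apply, smul_eq_mul, huv]
  generalize √(gramDisc Q u v) = s at *
  rw [gramDisc] at hs
  linear_combination (norm := module) -(Q v w * hs) • u

end Isotropic

section Dynamics

open Filter Topology

theorem natCast_le_pell_y_pow {d : ℤ} {a : Pell.Solution₁ d} (hx : 0 < a.x) (hy : 0 < a.y)
    (k : ℕ) : (k : ℤ) ≤ (a ^ k).y := by
  induction k with
  | zero => simp
  | succ k ih =>
    have hxk := Pell.Solution₁.x_pow_pos hx k
    rw [pow_succ, Pell.Solution₁.y_mul]
    push_cast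
    nlinarith

theorem tendsto_pell_y_pow {d : ℤ} {a : Pell.Solution₁ d} (hx : 0 < a.x) (hy : 0 < a.y) :
    Tendsto (fun k ↦ ((a ^ k).y : ℝ)) atTop atTop :=
  tendsto_atTop_mono (fun k ↦ by exact_mod_cast natCast_le_pell_y_pow hx hy k)
    tendsto_natCast_atTop_atTop

theorem tendsto_div_of_pell_eq {ι : Type*} {L : Filter ι} {D : ℝ} {x y : ι → ℝ}
    (hx : ∀ i, 0 ≤ x i) (h : ∀ i, x i ^ 2 - D * y i ^ 2 = 1) (hy : Tendsto y L atTop) :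
    Tendsto (fun i ↦ x i / y i) L (𝓝 √D) := by
  have hinv : Tendsto (fun i ↦ √(D + (y i)⁻¹ ^ 2)) L (𝓝 √D) := by
    simpa using ((hy.inv_tendsto_atTop.pow 2).const_add D).sqrt
  refine hinv.congr' ?_
  filter_upwards [hy.eventually_gt_atTop 0] with i hi
  rw [← Real.sqrt_sq (div_nonneg (hx i) hi.le)]
  congr 1
  field_simp
  linear_combination -h i

theorem tendsto_smul_pellEnd {V : Type*} [AddCommGroup V] [Module ℝ V] [TopologicalSpace V]
    [ContinuousAdd V] [ContinuousSMul ℝ V] {Q : LinearMap.BilinForm ℝ V} {u v : V}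
    {ι : Type*} {L : Filter ι} {x y : ι → ℝ} (hx : ∀ i, 0 ≤ x i)
    (h : ∀ i, x i ^ 2 - gramDisc Q u v * y i ^ 2 = 1) (hy : Tendsto y L atTop) (w : V) :
    Tendsto (fun i ↦ (2 * y i ^ 2)⁻¹ • pellEnd Q u v (x i) (y i) w) L
      (𝓝 (wedgeEnd Q u v (wedgeEnd Q u v w) + √(gramDisc Q u v) • wedgeEnd Q u v w)) := by
  have hinv : Tendsto (fun i ↦ 2⁻¹ * (y i)⁻¹ ^ 2) L (𝓝 0) := by
    simpa using (hy.inv_tendsto_atTop.pow 2).const_mul 2⁻¹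
  have hlim := (hinv.smul_const w).add
    (((tendsto_div_of_pell_eq hx h hy).smul_const (wedgeEnd Q u v w)).add_const
      (wedgeEnd Q u v (wedgeEnd Q u v w)))
  rw [zero_smul, zero_add, add_comm] at hlim
  refine hlim.congr' ?_
  filter_upwards [hy.eventually_gt_atTop 0] with i hi
  rw [pellEnd_apply]
  match_scalars <;> field_simp

end Dynamics

section Orbit

theorem intVec_sub (v w : Fin n → ℤ) : intVec (v - w) = intVec v - intVec w := by
  ext i
  simp [intVec]

theorem intVec_smul (k : ℤ) (v : Fin n → ℤ) : intVec (k • v) = (k : ℝ) • intVec v := by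
  ext i
  simp [intVec]

theorem intVec_add (v w : Fin n → ℤ) : intVec (v + w) = intVec v + intVec w := by
  ext i
  simp [intVec]

theorem intVec_single (i : Fin n) : intVec (Pi.single i 1) = Pi.single i 1 := by
  ext j
  simp [intVec, Pi.single_apply]

theorem intVec_ne_zero {v : Fin n → ℤ} (hv : v ≠ 0) : intVec v ≠ 0 := by
  obtain ⟨i, hi⟩ := Function.ne_iff.1 hv
  exact Function.ne_iff.2 ⟨i, Int.cast_ne_zero.2 hi⟩

theorem intVec_mulVec (P : Matrix (Fin n) (Fin n) ℤ) (v : Fin n → ℤ) :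
    intVec (P *ᵥ v) = P.map (Int.cast : ℤ → ℝ) *ᵥ intVec v := by
  ext i
  simp [intVec, mulVec, dotProduct]

/-- The homomorphism from the Pell group of the discriminant of `(u, v)` to the isometries of an
integral form. -/
def pellHom {M : Type*} [AddCommGroup M] {q : LinearMap.BilinForm ℤ M} (hq : q.IsSymm) (u v : M) :
    Pell.Solution₁ (gramDisc q u v) →* Module.End ℤ M where
  toFun a := pellEnd q u v a.x a.y
  map_one' := pellEnd_one_zero u v
  map_mul' a b := by
    rw [Pell.Solution₁.x_mul, Pell.Solution₁.y_mul, pellEnd_mul hq u v a.prop b.prop]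

/-- `pellHom` on `ℤⁿ`, in terms of invertible matrices. -/
noncomputable def pellUnit {q : LinearMap.BilinForm ℤ (Fin n → ℤ)} (hq : q.IsSymm)
    (u v : Fin n → ℤ) : Pell.Solution₁ (gramDisc q u v) →* (Matrix (Fin n) (Fin n) ℤ)ˣ :=
  ((LinearMap.toMatrixAlgEquiv' : Module.End ℤ (Fin n → ℤ) ≃ₐ[ℤ] _).toMonoidHom.comp
    (pellHom hq u v)).toHomUnits

variable {q : LinearMap.BilinForm ℤ (Fin n → ℤ)} {Q : LinearMap.BilinForm ℝ (Fin n → ℝ)}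

theorem pellUnit_mulVec (hq : q.IsSymm) (u v : Fin n → ℤ) (a : Pell.Solution₁ (gramDisc q u v))
    (w : Fin n → ℤ) :
    (pellUnit hq u v a : Matrix (Fin n) (Fin n) ℤ) *ᵥ w = pellEnd q u v a.x a.y w :=
  LinearMap.toMatrix'_mulVec (pellHom hq u v a) w

theorem gramDisc_intVec (hQq : ∀ v w, Q (intVec v) (intVec w) = q v w) (u v : Fin n → ℤ) :
    gramDisc Q (intVec u) (intVec v) = gramDisc q u v := by
  simp [gramDisc, hQq]

theorem isSymm_of_intVec (hQq : ∀ v w, Q (intVec v) (intVec w) = q v w) (hQ : Q.IsSymm) :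
    q.IsSymm :=
  ⟨fun v w ↦ by simpa [hQq] using hQ.eq (intVec v) (intVec w)⟩

theorem wedgeEnd_intVec (hQq : ∀ v w, Q (intVec v) (intVec w) = q v w) (u v w : Fin n → ℤ) :
    wedgeEnd Q (intVec u) (intVec v) (intVec w) = intVec (wedgeEnd q u v w) := by
  simp only [wedgeEnd_apply, hQq, intVec_sub, intVec_smul]

theorem map_pellUnit_mulVec (hQq : ∀ v w, Q (intVec v) (intVec w) = q v w) (hq : q.IsSymm)
    (u v : Fin n → ℤ) (a : Pell.Solution₁ (gramDisc q u v)) (w : Fin n → ℝ) :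
    (pellUnit hq u v a : Matrix (Fin n) (Fin n) ℤ).map (Int.cast : ℤ → ℝ) *ᵥ w =
      pellEnd Q (intVec u) (intVec v) a.x a.y w := by
  suffices h : Matrix.toLin' ((pellUnit hq u v a : Matrix (Fin n) (Fin n) ℤ).map
      (Int.cast : ℤ → ℝ)) = pellEnd Q (intVec u) (intVec v) a.x a.y from LinearMap.congr_fun h w
  refine (Pi.basisFun ℝ (Fin n)).ext fun i ↦ ?_
  rw [Pi.basisFun_apply, ← intVec_single, Matrix.toLin'_apply, ← intVec_mulVec, pellUnit_mulVec]
  simp only [pellEnd_apply, wedgeEnd_intVec hQq, intVec_add, intVec_smul]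
  push_cast
  rfl

/-- The group `Γ` contains a positive power of every isometry of the integral form `q`. Subgroups of
finite index in the isometry group have this property. -/
def ContainsIsometryPowers (q : LinearMap.BilinForm ℤ (Fin n → ℤ))
    (Γ : Subgroup (Matrix (Fin n) (Fin n) ℤ)ˣ) : Prop :=
  ∀ P : (Matrix (Fin n) (Fin n) ℤ)ˣ,
    (∀ v w : Fin n → ℤ, q (P.val *ᵥ v) (P.val *ᵥ w) = q v w) → ∃ m, 0 < m ∧ P ^ m ∈ Γ

/-- The union of the lines through the points of the orbit `Γ y`, with the origin removed. -/
def orbitCone (Γ : Subgroup (Matrix (Fin n) (Fin n) ℤ)ˣ) (y : Fin n → ℝ) : Set (Fin n → ℝ) :=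
  {z | ∃ c : ℝ, c ≠ 0 ∧ ∃ γ ∈ Γ,
    z = c • (γ : Matrix (Fin n) (Fin n) ℤ).map (Int.cast : ℤ → ℝ) *ᵥ y}

variable {Γ : Subgroup (Matrix (Fin n) (Fin n) ℤ)ˣ} {x x' y : Fin n → ℝ}

theorem smul_mem_orbitCone {c : ℝ} (hc : c ≠ 0) (hx : x ∈ orbitCone Γ y) :
    c • x ∈ orbitCone Γ y := by
  obtain ⟨c', hc', γ, hγ, rfl⟩ := hx
  exact ⟨c * c', mul_ne_zero hc hc', γ, hγ, smul_smul ..⟩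

theorem mulVec_mem_orbitCone {γ : (Matrix (Fin n) (Fin n) ℤ)ˣ} (hγ : γ ∈ Γ)
    (hx : x ∈ orbitCone Γ y) :
    (γ : Matrix (Fin n) (Fin n) ℤ).map (Int.cast : ℤ → ℝ) *ᵥ x ∈ orbitCone Γ y := by
  obtain ⟨c, hc, γ', hγ', rfl⟩ := hx
  refine ⟨c, hc, γ * γ', Γ.mul_mem hγ hγ', ?_⟩
  have hmap := Matrix.map_mul (f := Int.castRingHom ℝ) (L := γ.val) (M := γ'.val)
  rw [Int.coe_castRingHom] at hmap
  rw [Units.val_mul, hmap, mulVec_smul, mulVec_mulVec]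

theorem smul_mem_closure_orbitCone {c : ℝ} (hc : c ≠ 0) (hx : x ∈ closure (orbitCone Γ y)) :
    c • x ∈ closure (orbitCone Γ y) :=
  map_mem_closure (continuous_const_smul c) hx fun _ ↦ smul_mem_orbitCone hc

theorem mem_closure_orbitCone_trans (hx : x ∈ closure (orbitCone Γ x'))
    (hx' : x' ∈ closure (orbitCone Γ y)) : x ∈ closure (orbitCone Γ y) := by
  refine closure_minimal ?_ isClosed_closure hx
  rintro _ ⟨c, hc, γ, hγ, rfl⟩
  exact smul_mem_closure_orbitCone hc <|
    map_mem_closure (by fun_prop) hx' fun _ ↦ mulVec_mem_orbitCone hγ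

theorem wedgeEnd_sq_add_mem_closure_orbitCone
    (hΓ : ContainsIsometryPowers q Γ) (hQq : ∀ v w, Q (intVec v) (intVec w) = q v w)
    (hq : q.IsSymm) {u v : Fin n → ℤ}
    {a : Pell.Solution₁ (gramDisc q u v)} (hx : 0 < a.x) (hy : 0 < a.y) (w : Fin n → ℝ) :
    wedgeEnd Q (intVec u) (intVec v) (wedgeEnd Q (intVec u) (intVec v) w) +
        √(gramDisc Q (intVec u) (intVec v)) • wedgeEnd Q (intVec u) (intVec v) w ∈
      closure (orbitCone Γ w) := by
  obtain ⟨m, hm, hmem⟩ := hΓ (pellUnit hq u v a) fun w z ↦ by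
    simpa only [pellUnit_mulVec] using pellEnd_isometry hq u v a.prop w z
  have hbx : 0 < (a ^ m).x := Pell.Solution₁.x_pow_pos hx m
  have hby : 0 < (a ^ m).y := by
    obtain ⟨k, rfl⟩ := Nat.exists_eq_succ_of_ne_zero hm.ne'
    exact Pell.Solution₁.y_pow_succ_pos hx hy k
  have hy_lim := tendsto_pell_y_pow hbx hby
  refine mem_closure_of_tendsto (tendsto_smul_pellEnd (x := fun k ↦ (((a ^ m) ^ k).x : ℝ))
    (fun k ↦ by exact_mod_cast (Pell.Solution₁.x_pow_pos hbx k).le)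
    (fun k ↦ by rw [gramDisc_intVec hQq]; exact_mod_cast ((a ^ m) ^ k).prop) hy_lim w) ?_
  filter_upwards [hy_lim.eventually_gt_atTop 0] with k hk
  refine ⟨(2 * (((a ^ m) ^ k).y : ℝ) ^ 2)⁻¹, by positivity, pellUnit hq u v ((a ^ m) ^ k), ?_, ?_⟩
  · rw [map_pow, map_pow]
    exact Γ.pow_mem hmem k
  · rw [map_pellUnit_mulVec hQq]

theorem isotropicVec_mem_closure_orbitCone_of_not_isSquare
    (hΓ : ContainsIsometryPowers q Γ) (hQq : ∀ v w, Q (intVec v) (intVec w) = q v w)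
    (hQ : Q.IsSymm) {u v : Fin n → ℤ} (hD : 0 < gramDisc q u v)
    (hsq : ¬IsSquare (gramDisc q u v)) (hne : isotropicVec Q (intVec u) (intVec v) ≠ 0)
    (hy : Q (isotropicVec Q (intVec v) (intVec u)) y ≠ 0) :
    isotropicVec Q (intVec u) (intVec v) ∈ closure (orbitCone Γ y) := by
  obtain ⟨a, hax, hay⟩ := Pell.Solution₁.exists_pos_of_not_isSquare hD hsq
  have hmem := wedgeEnd_sq_add_mem_closure_orbitCone hΓ hQq (isSymm_of_intVec hQq hQ)
    (zero_lt_one.trans hax) hay y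
  have hD' : 0 ≤ gramDisc Q (intVec u) (intVec v) := by
    rw [gramDisc_intVec hQq]
    exact_mod_cast hD.le
  have hrank := smul_wedgeEnd_sq_add hQ hD' y
  have hs : Q (intVec u) (intVec v) + √(gramDisc Q (intVec u) (intVec v)) ≠ 0 := by
    intro h0
    rw [h0, zero_smul] at hrank
    exact smul_ne_zero hy hne hrank.symm
  rw [← inv_smul_eq_iff₀ hy, smul_smul] at hrank
  rw [← hrank]
  exact smul_mem_closure_orbitCone (mul_ne_zero (inv_ne_zero hy) hs) hmem

theorem intVec_mem_closure_orbitCone_of_isotropic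
    (hΓ : ContainsIsometryPowers q Γ) (hQq : ∀ v w, Q (intVec v) (intVec w) = q v w)
    (hQ : Q.IsSymm) {e f : Fin n → ℤ} (he : q e e = 0) (hef : q e f = 0) (hf : q f f ≠ 0)
    (hy : Q (intVec e) y ≠ 0) :
    intVec e ∈ closure (orbitCone Γ y) := by
  have hD : gramDisc q e f = 0 := by simp [gramDisc, he, hef]
  have hmem := wedgeEnd_sq_add_mem_closure_orbitCone hΓ hQq (isSymm_of_intVec hQq hQ)
    (u := e) (v := f) (a := Pell.Solution₁.mk 1 1 (by simp [hD])) one_pos one_pos y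
  have hfR : Q (intVec f) (intVec f) ≠ 0 := by simpa [hQq] using hf
  rw [wedgeEnd_sq_apply_of_isotropic hQ (by simp [hQq, he]) (by simp [hQq, hef]),
    gramDisc_intVec hQq, hD, Int.cast_zero, Real.sqrt_zero, zero_smul, add_zero] at hmem
  have hc : -(Q (intVec f) (intVec f) * Q (intVec e) y) ≠ 0 := neg_ne_zero.2 (mul_ne_zero hfR hy)
  simpa only [inv_smul_smul₀ hc] using smul_mem_closure_orbitCone (inv_ne_zero hc) hmem

end Orbit

section Density

open Filter Topology

@[fun_prop]
theorem continuous_bilinForm_apply {V X : Type*} [NormedAddCommGroup V] [NormedSpace ℝ V]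
    [FiniteDimensional ℝ V] [TopologicalSpace X] (Q : LinearMap.BilinForm ℝ V) {f g : X → V}
    (hf : Continuous f) (hg : Continuous g) : Continuous fun t ↦ Q (f t) (g t) :=
  (Q.toContinuousBilinearMap.continuous.comp hf).clm_apply hg

section Continuity

variable {V : Type*} [NormedAddCommGroup V] [NormedSpace ℝ V] [FiniteDimensional ℝ V]
  (Q : LinearMap.BilinForm ℝ V)

theorem continuous_gramDisc : Continuous fun p : V × V ↦ gramDisc Q p.1 p.2 := by
  unfold gramDisc
  fun_prop

theorem continuous_isotropicVec : Continuous fun p : V × V ↦ isotropicVec Q p.1 p.2 := by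
  unfold isotropicVec gramDisc
  fun_prop

theorem continuous_wedgeEnd_apply (w : V) : Continuous fun p : V × V ↦ wedgeEnd Q p.1 p.2 w := by
  simp only [wedgeEnd_apply]
  fun_prop

end Continuity

theorem tendsto_inv_smul_intVec_round (v : Fin n → ℝ) :
    Tendsto (fun k : ℕ ↦ (k : ℝ)⁻¹ • intVec fun i ↦ round ((k : ℝ) * v i)) atTop (𝓝 v) := by
  refine tendsto_pi_nhds.2 fun i ↦ tendsto_iff_norm_sub_tendsto_zero.2 ?_
  have hbound : Tendsto (fun k : ℕ ↦ (k : ℝ)⁻¹ * (1 / 2)) atTop (𝓝 0) := by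
    simpa using tendsto_inv_atTop_nhds_zero_nat.mul_const (1 / 2 : ℝ)
  refine squeeze_zero' (Eventually.of_forall fun k ↦ norm_nonneg _) ?_ hbound
  filter_upwards [eventually_gt_atTop 0] with k hk
  have hk' : (0 : ℝ) < k := by exact_mod_cast hk
  calc ‖(k : ℝ)⁻¹ * (round ((k : ℝ) * v i) : ℝ) - v i‖
      = (k : ℝ)⁻¹ * |(k : ℝ) * v i - round ((k : ℝ) * v i)| := by
        rw [norm_sub_rev, Real.norm_eq_abs, ← abs_of_pos (inv_pos.2 hk'), ← abs_mul,
          abs_of_pos (inv_pos.2 hk'), mul_sub, inv_mul_cancel_left₀ hk'.ne']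
    _ ≤ (k : ℝ)⁻¹ * (1 / 2) := by gcongr; exact abs_sub_round _

theorem dense_smul_intVec_pairs :
    Dense {p : (Fin n → ℝ) × (Fin n → ℝ) |
      ∃ c : ℝ, c ≠ 0 ∧ ∃ u v : Fin n → ℤ, p = (c • intVec u, c • intVec v)} := by
  intro p
  refine mem_closure_of_tendsto ((tendsto_inv_smul_intVec_round p.1).prodMk_nhds
    (tendsto_inv_smul_intVec_round p.2)) ?_
  filter_upwards [eventually_gt_atTop 0] with k hk
  exact ⟨(k : ℝ)⁻¹, by positivity, _, _, rfl⟩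

variable {q : LinearMap.BilinForm ℤ (Fin n → ℤ)} {Q : LinearMap.BilinForm ℝ (Fin n → ℝ)}

theorem exists_int_orthogonal_ne_zero (hQq : ∀ v w, Q (intVec v) (intVec w) = q v w)
    (hQ : Q.IsSymm) {e : Fin n → ℤ} {y w : Fin n → ℝ} (hy : Q (intVec e) y ≠ 0)
    (hew : Q (intVec e) w = 0) (hw : Q w w ≠ 0) : ∃ f, q e f = 0 ∧ q f f ≠ 0 := by
  let φ : (Fin n → ℝ) × (Fin n → ℝ) → Fin n → ℝ := fun p ↦ wedgeEnd Q p.1 p.2 (intVec e)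
  have hφ : Continuous fun p ↦ Q (φ p) (φ p) := by
    have := continuous_wedgeEnd_apply Q (intVec e)
    fun_prop
  have hφyw : φ (y, w) = Q (intVec e) y • w := by
    simp [φ, wedgeEnd_apply, hQ.eq w, hQ.eq y, hew]
  have hopen : IsOpen {p | Q (φ p) (φ p) ≠ 0} := isOpen_ne_fun hφ continuous_const
  obtain ⟨_, ⟨c, -, u, v, rfl⟩, hne⟩ :=
    dense_smul_intVec_pairs.exists_mem_open hopen ⟨(y, w), by simp [hφyw, hy, hw]⟩
  have hφuv : φ (c • intVec u, c • intVec v) = c ^ 2 • intVec (wedgeEnd q u v e) := by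
    rw [← wedgeEnd_intVec hQq]
    simp only [φ, wedgeEnd_apply, map_smul, LinearMap.smul_apply]
    module
  have hq := isSymm_of_intVec hQq hQ
  refine ⟨wedgeEnd q u v e, ?_, fun h0 ↦ hne ?_⟩
  · rw [wedgeEnd_apply, map_sub, map_smul, map_smul, hq.eq e u, hq.eq e v, smul_eq_mul,
      smul_eq_mul, mul_comm, sub_self]
  · simp [hφuv, hQq, h0]

variable {Γ : Subgroup (Matrix (Fin n) (Fin n) ℤ)ˣ} {x y : Fin n → ℝ}

theorem exists_intVec_eq_isotropicVec (hQq : ∀ v w, Q (intVec v) (intVec w) = q v w)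
    {u v : Fin n → ℤ} (hsq : IsSquare (gramDisc q u v)) :
    ∃ e, intVec e = isotropicVec Q (intVec u) (intVec v) := by
  obtain ⟨d, hd⟩ := hsq
  have hsqrt : √(gramDisc Q (intVec u) (intVec v)) = (|d| : ℤ) := by
    rw [gramDisc_intVec hQq, hd, Int.cast_mul, Real.sqrt_mul_self_eq_abs, Int.cast_abs]
  exact ⟨(q u v + |d|) • v - q v v • u, by
    simp only [isotropicVec, intVec_sub, intVec_smul, hQq, hsqrt, Int.cast_add]⟩

theorem isotropicVec_intVec_mem_closure_orbitCone
    (hΓ : ContainsIsometryPowers q Γ) (hQq : ∀ v w, Q (intVec v) (intVec w) = q v w)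
    (hQ : Q.IsSymm) (hw : ∀ x, ∃ w, Q x w = 0 ∧ Q w w ≠ 0)
    {u v : Fin n → ℤ} (hD : 0 < gramDisc Q (intVec u) (intVec v))
    (hvu : Q (isotropicVec Q (intVec v) (intVec u)) y ≠ 0)
    (huv : Q (isotropicVec Q (intVec u) (intVec v)) y ≠ 0) :
    isotropicVec Q (intVec u) (intVec v) ∈ closure (orbitCone Γ y) := by
  by_cases hsq : IsSquare (gramDisc q u v)
  · obtain ⟨e, he⟩ := exists_intVec_eq_isotropicVec hQq hsq
    have hee : q e e = 0 := by
      have := isotropicVec_isotropic hQ hD.le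
      rw [← he, hQq] at this
      exact_mod_cast this
    rw [← he] at huv ⊢
    obtain ⟨w, hew, hww⟩ := hw (intVec e)
    obtain ⟨f, hef, hff⟩ := exists_int_orthogonal_ne_zero hQq hQ huv hew hww
    exact intVec_mem_closure_orbitCone_of_isotropic hΓ hQq hQ hee hef hff huv
  · refine isotropicVec_mem_closure_orbitCone_of_not_isSquare hΓ hQq hQ ?_ hsq ?_ hvu
    · rw [gramDisc_intVec hQq] at hD
      exact_mod_cast hD
    · rintro h0
      simp [h0] at huv

theorem isotropicVec_mem_closure_orbitCone
    (hΓ : ContainsIsometryPowers q Γ) (hQq : ∀ v w, Q (intVec v) (intVec w) = q v w)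
    (hQ : Q.IsSymm) (hw : ∀ x, ∃ w, Q x w = 0 ∧ Q w w ≠ 0)
    {u v : Fin n → ℝ} (hD : 0 < gramDisc Q u v) (hvu : Q (isotropicVec Q v u) y ≠ 0)
    (huv : Q (isotropicVec Q u v) y ≠ 0) :
    isotropicVec Q u v ∈ closure (orbitCone Γ y) := by
  let U : Set ((Fin n → ℝ) × (Fin n → ℝ)) := {p | 0 < gramDisc Q p.1 p.2 ∧
    Q (isotropicVec Q p.2 p.1) y ≠ 0 ∧ Q (isotropicVec Q p.1 p.2) y ≠ 0}
  have hcont := continuous_isotropicVec Q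
  have hU : IsOpen U := by
    refine (isOpen_lt continuous_const (continuous_gramDisc Q)).inter
      ((isOpen_ne_fun ?_ continuous_const).inter (isOpen_ne_fun ?_ continuous_const))
    · have := hcont.comp continuous_swap
      exact continuous_bilinForm_apply Q this continuous_const
    · fun_prop
  have hmem : (u, v) ∈ closure (U ∩ _) :=
    dense_smul_intVec_pairs.open_subset_closure_inter hU ⟨hD, hvu, huv⟩
  rw [← closure_closure]
  refine map_mem_closure (f := fun p : _ × _ ↦ isotropicVec Q p.1 p.2) hcont hmem ?_
  rintro _ ⟨⟨hD, hvu, huv⟩, c, hc, a, b, rfl⟩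
  simp only [isotropicVec_smul_smul, map_smul, LinearMap.smul_apply, smul_eq_mul] at hvu huv ⊢
  rw [gramDisc_smul_smul] at hD
  refine smul_mem_closure_orbitCone (pow_ne_zero 3 hc) ?_
  exact isotropicVec_intVec_mem_closure_orbitCone hΓ hQq hQ hw
    (pos_of_mul_pos_right hD (by positivity)) (right_ne_zero_of_mul hvu) (right_ne_zero_of_mul huv)

theorem mem_closure_orbitCone_of_isotropic_of_ne_zero
    (hΓ : ContainsIsometryPowers q Γ) (hQq : ∀ v w, Q (intVec v) (intVec w) = q v w)
    (hQ : Q.IsSymm) (hw : ∀ x, ∃ w, Q x w = 0 ∧ Q w w ≠ 0)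
    (hx : Q x x = 0) (hxy : Q x y ≠ 0) : x ∈ closure (orbitCone Γ y) := by
  obtain ⟨w, hxw, hww⟩ : ∃ w, Q x w = 0 ∧ Q w w ≠ Q y y := by
    obtain ⟨w, hxw, hww⟩ := hw x
    by_cases hyy : Q y y = 0
    · exact ⟨w, hxw, by rwa [hyy]⟩
    · exact ⟨0, by simp, by simpa using Ne.symm hyy⟩
  -- The factor `Q x y` makes `Q u x` positive.
  set u := Q x y • (y + w) with hu
  have hux : Q u x = Q x y ^ 2 := by
    rw [hQ.eq, hu, map_smul, map_add, hxw, add_zero, smul_eq_mul, sq]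
  have hux_pos : 0 < Q u x := by rw [hux]; positivity
  have hux' := isotropicVec_of_isotropic_right hx hux_pos.le
  have hxu' : Q (isotropicVec Q x u) y = Q x y ^ 3 * (Q y y - Q w w) := by
    rw [isotropicVec_of_isotropic_left hQ hx hux_pos.le, hux]
    simp only [hu, map_sub, map_add, map_smul, LinearMap.sub_apply, LinearMap.add_apply,
      LinearMap.smul_apply, smul_eq_mul, hQ.eq w y]
    ring
  have hmem := isotropicVec_mem_closure_orbitCone (u := u) (v := x) (y := y) hΓ hQq hQ hw
    (by simpa [gramDisc, hx] using pow_pos hux_pos 2)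
    (by rw [hxu']; exact mul_ne_zero (pow_ne_zero 3 hxy) (sub_ne_zero.2 hww.symm))
    (by simp [hux', hux_pos.ne', hxy])
  have hc : 2 * Q u x ≠ 0 := by positivity
  rw [hux'] at hmem
  simpa only [inv_smul_smul₀ hc] using smul_mem_closure_orbitCone (inv_ne_zero hc) hmem

theorem exists_apply_ne_zero {R M : Type*} [CommRing R] [AddCommGroup M] [Module R M]
    {Q : LinearMap.BilinForm R M} (hnd : Q.SeparatingLeft) {x : M} (hx : x ≠ 0) :
    ∃ z, Q x z ≠ 0 := by
  by_contra! h
  exact hx (hnd x h)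

theorem mem_closure_orbitCone_of_isotropic
    (hΓ : ContainsIsometryPowers q Γ) (hQq : ∀ v w, Q (intVec v) (intVec w) = q v w)
    (hQ : Q.IsSymm) (hnd : Q.SeparatingLeft) (hw : ∀ x, ∃ w, Q x w = 0 ∧ Q w w ≠ 0)
    (hx : Q x x = 0) (hx0 : x ≠ 0) (hy0 : y ≠ 0) : x ∈ closure (orbitCone Γ y) := by
  by_cases hxy : Q x y = 0
  swap
  · exact mem_closure_orbitCone_of_isotropic_of_ne_zero hΓ hQq hQ hw hx hxy
  obtain ⟨f, hxf, hyf⟩ : ∃ f, Q x f ≠ 0 ∧ Q y f ≠ 0 := by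
    obtain ⟨f, hf⟩ := Module.Dual.exists_forall_ne_zero_of_forall_exists (K := ℝ) ![Q x, Q y] <| by
      simpa [Fin.forall_fin_two] using ⟨exists_apply_ne_zero hnd hx0, exists_apply_ne_zero hnd hy0⟩
    exact ⟨f, hf 0, hf 1⟩
  -- `x'` is proportional to the reflection of `x` in the hyperplane orthogonal to `f`.
  set x' := Q f f • x - (2 * Q x f) • f with hx'
  have hx'x' : Q x' x' = 0 := by
    simp only [hx', map_sub, map_smul, LinearMap.sub_apply, LinearMap.smul_apply, smul_eq_mul, hx,
      hQ.eq f x]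
    ring
  have hxx' : Q x x' ≠ 0 := by
    simpa [hx', hx] using hxf
  have hx'y : Q x' y ≠ 0 := by
    simpa [hx', hxy, hQ.eq f y] using ⟨hxf, hyf⟩
  exact mem_closure_orbitCone_trans
    (mem_closure_orbitCone_of_isotropic_of_ne_zero hΓ hQq hQ hw hx hxx')
    (mem_closure_orbitCone_of_isotropic_of_ne_zero hΓ hQq hQ hw hx'x' hx'y)

end Density

section PositivePlanes

section Indefinite

variable {V : Type*} [AddCommGroup V] [Module ℝ V] {Q : LinearMap.BilinForm ℝ V}
  {W Wp : Submodule ℝ V}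

theorem forall_pos_apply_iff (hQ : Q.IsSymm) (u v : V) :
    (∀ a b : ℝ, ¬(a = 0 ∧ b = 0) → 0 < Q (a • u + b • v) (a • u + b • v)) ↔
      0 < Q u u ∧ gramDisc Q u v < 0 := by
  have hexpand (a b : ℝ) : Q u u * Q (a • u + b • v) (a • u + b • v) =
      (a * Q u u + b * Q u v) ^ 2 - b ^ 2 * gramDisc Q u v := by
    simp only [map_add, map_smul, LinearMap.add_apply, LinearMap.smul_apply, smul_eq_mul,
      hQ.eq v u, gramDisc]
    ring
  refine ⟨fun h ↦ ?_, fun ⟨hu, hD⟩ a b hab ↦ ?_⟩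
  · have hu : 0 < Q u u := by simpa using h 1 0 (by simp)
    have hpos := mul_pos hu (h (-Q u v) (Q u u) fun h0 ↦ hu.ne' h0.2)
    rw [hexpand] at hpos
    exact ⟨hu, by nlinarith [pow_pos hu 2]⟩
  · refine pos_of_mul_pos_right (a := Q u u) ?_ hu.le
    rw [hexpand]
    rcases eq_or_ne b 0 with rfl | hb
    · have ha : a ≠ 0 := fun ha ↦ hab ⟨ha, rfl⟩
      have : 0 < (a * Q u u) ^ 2 := by positivity
      simpa using this
    · have hbD : 0 < b ^ 2 * -gramDisc Q u v := mul_pos (by positivity) (neg_pos.2 hD)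
      linarith [sq_nonneg (a * Q u u + b * Q u v)]

theorem exists_orthogonal_pos [FiniteDimensional ℝ V] (hWp : ∀ x ∈ Wp, x ≠ 0 → 0 < Q x x)
    (h : Module.finrank ℝ W < Module.finrank ℝ Wp) :
    ∃ z, (∀ u ∈ W, Q z u = 0) ∧ 0 < Q z z := by
  have hker : (Q.domRestrict₁₂ Wp W).ker ≠ ⊥ :=
    LinearMap.ker_ne_bot_of_finrank_lt (by rwa [Subspace.dual_finrank_eq])
  obtain ⟨z, hz, hz0⟩ := Submodule.exists_mem_ne_zero_of_ne_bot hker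
  exact ⟨z, fun u hu ↦ LinearMap.congr_fun hz ⟨u, hu⟩, hWp z z.2 (by simpa using hz0)⟩

theorem exists_orthogonal_self_ne_zero [FiniteDimensional ℝ V] (hQ : Q.IsSymm)
    (hWp : ∀ x ∈ Wp, x ≠ 0 → 0 < Q x x) (h : 1 < Module.finrank ℝ Wp) (x : V) :
    ∃ w, Q x w = 0 ∧ Q w w ≠ 0 := by
  obtain ⟨w, hw, hww⟩ := exists_orthogonal_pos (W := ℝ ∙ x) hWp
    ((finrank_span_le_card {x}).trans_lt (by rwa [Set.toFinset_singleton, Finset.card_singleton]))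
  exact ⟨w, (hQ.eq x w).trans (hw x (Submodule.mem_span_singleton_self x)), hww.ne'⟩

theorem exists_orthogonal_neg [FiniteDimensional ℝ V] (hQ : Q.IsSymm)
    (hW : ∀ x ∈ W, x ≠ 0 → 0 < Q x x) {w : V} (hw : Q w w < 0) :
    ∃ m ∈ Q.orthogonal W, Q m m < 0 := by
  have hdisj : Disjoint W (Q.orthogonal W) := Submodule.disjoint_def.2 fun x hx hx' ↦ by
    by_contra hx0
    exact (hW x hx hx0).ne' (hx' x hx)
  have hcompl := (LinearMap.BilinForm.isCompl_orthogonal_iff_disjoint hQ.isRefl).2 hdisj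
  obtain ⟨a, ha, m, hm, rfl⟩ := Submodule.mem_sup.1 (hcompl.sup_eq_top ▸ Submodule.mem_top : w ∈ _)
  have ham : Q a m = 0 := hm a ha
  have haa : 0 ≤ Q a a := by
    rcases eq_or_ne a 0 with rfl | ha0
    · simp
    · exact (hW a ha ha0).le
  refine ⟨m, hm, ?_⟩
  simp only [map_add, LinearMap.add_apply, hQ.eq m a, ham] at hw
  linarith

theorem isotropicVec_ne_zero {z m : V} (hz : 0 < Q z z) (hm : Q m m < 0) :
    isotropicVec Q z m ≠ 0 := by
  intro h0
  obtain ⟨c, rfl⟩ : ∃ c : ℝ, z = c • m :=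
    ⟨_, by rw [← smul_smul, eq_inv_smul_iff₀ hm.ne, sub_eq_zero.1 h0]⟩
  simp only [map_smul, LinearMap.smul_apply, smul_eq_mul] at hz
  nlinarith [mul_self_nonneg c]

theorem exists_isotropic_mem_orthogonal [FiniteDimensional ℝ V] (hQ : Q.IsSymm)
    (hW : ∀ x ∈ W, x ≠ 0 → 0 < Q x x) (hWp : ∀ x ∈ Wp, x ≠ 0 → 0 < Q x x)
    (h : Module.finrank ℝ W < Module.finrank ℝ Wp) {w : V} (hw : Q w w < 0) :
    ∃ x ∈ Q.orthogonal W, x ≠ 0 ∧ Q x x = 0 := by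
  obtain ⟨z, hzW, hz⟩ := exists_orthogonal_pos hWp h
  obtain ⟨m, hmW, hm⟩ := exists_orthogonal_neg hQ hW hw
  have hzW' : z ∈ Q.orthogonal W := fun u hu ↦ (hQ.eq u z).trans (hzW u hu)
  refine ⟨isotropicVec Q z m, sub_mem (Submodule.smul_mem _ _ hmW) (Submodule.smul_mem _ _ hzW'),
    isotropicVec_ne_zero hz hm, isotropicVec_isotropic hQ ?_⟩
  rw [gramDisc]
  nlinarith [sq_nonneg (Q z m)]

end Indefinite

theorem mem_closure_orthogonal_pairs {V : Type*} [NormedAddCommGroup V] [NormedSpace ℝ V]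
    [FiniteDimensional ℝ V] {Q : LinearMap.BilinForm ℝ V} (hQ : Q.IsSymm) {U : Set (V × V)}
    (hU : IsOpen U) {S : Set V} {p : V × V} (hp : p ∈ U) {x z : V} (hx : x ∈ closure S)
    (hxz : Q x z ≠ 0) (h₁ : Q p.1 x = 0) (h₂ : Q p.2 x = 0) :
    p ∈ closure {p' | p' ∈ U ∧ ∃ y ∈ S, Q p'.1 y = 0 ∧ Q p'.2 y = 0} := by
  -- `proj y` projects along `z` onto the hyperplane orthogonal to `y`.
  let proj (y v : V) : V := v - (Q v y / Q y z) • z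
  have hproj (y v : V) (hy : Q y z ≠ 0) : Q (proj y v) y = 0 := by
    simp only [proj, map_sub, map_smul, LinearMap.sub_apply, LinearMap.smul_apply, smul_eq_mul,
      hQ.eq z y, div_mul_cancel₀ _ hy, sub_self]
  have hpx : (proj x p.1, proj x p.2) = p := by simp [proj, h₁, h₂]
  have hcont : ContinuousAt (fun y ↦ (proj y p.1, proj y p.2)) x := by
    have hdiv (v : V) : ContinuousAt (fun y ↦ Q v y / Q y z) x :=
      ContinuousAt.div (by fun_prop) (by fun_prop) hxz
    exact (continuousAt_const.sub ((hdiv p.1).smul continuousAt_const)).prodMk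
      (continuousAt_const.sub ((hdiv p.2).smul continuousAt_const))
  have hopen : IsOpen {y | Q y z ≠ 0} := isOpen_ne_fun (by fun_prop) continuous_const
  have hclosure : p ∈ closure {p' : V × V | ∃ y ∈ S, Q p'.1 y = 0 ∧ Q p'.2 y = 0} :=
    hpx ▸ hcont.continuousWithinAt.mem_closure (hopen.inter_closure ⟨hxz, hx⟩)
      fun y ⟨hyz, hyS⟩ ↦ ⟨y, hyS, hproj y _ hyz, hproj y _ hyz⟩
  exact hU.inter_closure ⟨hp, hclosure⟩

theorem finrank_span_pair_le_two {K V : Type*} [Field K] [AddCommGroup V] [Module K V] (u v : V) :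
    Module.finrank K (Submodule.span K {u, v}) ≤ 2 := by
  classical
  rw [← Finset.coe_pair]
  exact (finrank_span_finset_le_card _).trans Finset.card_le_two

theorem qForm_eq_toBilin' (B : Matrix (Fin n) (Fin n) ℝ) (x y : Fin n → ℝ) :
    qForm B x y = Matrix.toBilin' B x y :=
  (Matrix.toBilin'_apply' B x y).symm

variable {B : Matrix (Fin n) (Fin n) ℝ}

theorem isOpen_setOf_spansPosPlane (hB : (Matrix.toBilin' B).IsSymm) :
    IsOpen {p | SpansPosPlane B p} := by
  simp only [SpansPosPlane, qForm_eq_toBilin', forall_pos_apply_iff hB, Set.ofPred_and]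
  exact (isOpen_lt continuous_const (by fun_prop)).inter
    (isOpen_lt (continuous_gramDisc _) continuous_const)

theorem SpansPosPlane.pos_of_mem_span {p : (Fin n → ℝ) × (Fin n → ℝ)} (hp : SpansPosPlane B p)
    {x : Fin n → ℝ} (hx : x ∈ Submodule.span ℝ {p.1, p.2}) (hx0 : x ≠ 0) :
    0 < Matrix.toBilin' B x x := by
  obtain ⟨a, b, rfl⟩ := Submodule.mem_span_pair.1 hx
  rw [← qForm_eq_toBilin']
  refine hp a b ?_
  rintro ⟨rfl, rfl⟩
  simp at hx0

theorem exists_bilinForm_intVec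
    (hint : ∀ v w : Fin n → ℤ, ∃ k : ℤ, qForm B (intVec v) (intVec w) = (k : ℝ)) :
    ∃ q : LinearMap.BilinForm ℤ (Fin n → ℤ),
      ∀ v w, Matrix.toBilin' B (intVec v) (intVec w) = q v w := by
  choose k hk using fun i j : Fin n ↦ hint (Pi.single i 1) (Pi.single j 1)
  have hBk (i j : Fin n) : B i j = k i j := by
    simpa [intVec_single, qForm] using hk i j
  refine ⟨Matrix.toBilin' (Matrix.of k), fun v w ↦ ?_⟩
  simp [Matrix.toBilin'_apply, intVec, hBk]

theorem transpose_mul_mul_eq_of_isometry {q : LinearMap.BilinForm ℤ (Fin n → ℤ)}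
    (hq : ∀ v w, Matrix.toBilin' B (intVec v) (intVec w) = q v w)
    {P : Matrix (Fin n) (Fin n) ℤ} (hP : ∀ v w : Fin n → ℤ, q (P *ᵥ v) (P *ᵥ w) = q v w) :
    (P.map (Int.cast : ℤ → ℝ))ᵀ * B * P.map (Int.cast : ℤ → ℝ) = B := by
  apply Matrix.toBilin'.injective
  rw [← Matrix.toBilin'_comp]
  refine LinearMap.BilinForm.ext_basis (Pi.basisFun ℝ (Fin n)) fun i j ↦ ?_
  simp only [Pi.basisFun_apply, ← intVec_single, LinearMap.BilinForm.comp_apply,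
    Matrix.toLin'_apply, ← intVec_mulVec, hq, hP]

end PositivePlanes

theorem dense_positive_planes_orthogonal_to_orbit_general
    (B : Matrix (Fin n) (Fin n) ℝ) (hB : B.IsSymm) (hdet : B.det ≠ 0)
    (hint : ∀ v w : Fin n → ℤ, ∃ k : ℤ, qForm B (intVec v) (intVec w) = (k : ℝ))
    (Wp : Submodule ℝ (Fin n → ℝ)) (hWp : 3 ≤ Module.finrank ℝ Wp)
    (hpos : ∀ x ∈ Wp, x ≠ 0 → 0 < qForm B x x) (hneg : ∃ w, qForm B w w < 0)
    (Γ : Subgroup (Matrix (Fin n) (Fin n) ℤ)ˣ)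
    (hΓ : ∀ P : (Matrix (Fin n) (Fin n) ℤ)ˣ,
      ((P : Matrix (Fin n) (Fin n) ℤ).map (Int.cast : ℤ → ℝ))ᵀ * B *
        ((P : Matrix (Fin n) (Fin n) ℤ).map (Int.cast : ℤ → ℝ)) = B → ∃ m, 0 < m ∧ P ^ m ∈ Γ)
    (l : Fin n → ℝ) (hl : l ≠ 0) :
    ∀ p : (Fin n → ℝ) × (Fin n → ℝ), SpansPosPlane B p →
      p ∈ closure {p' : (Fin n → ℝ) × (Fin n → ℝ) | SpansPosPlane B p' ∧
        ∃ P ∈ Γ, qForm B p'.1 ((P : Matrix (Fin n) (Fin n) ℤ).map (Int.cast : ℤ → ℝ) *ᵥ l) = 0 ∧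
          qForm B p'.2 ((P : Matrix (Fin n) (Fin n) ℤ).map (Int.cast : ℤ → ℝ) *ᵥ l) = 0} := by
  intro p hp
  obtain ⟨q, hq⟩ := exists_bilinForm_intVec hint
  obtain ⟨w, hw⟩ := hneg
  simp only [qForm_eq_toBilin'] at hpos hw ⊢
  have hQ : (Matrix.toBilin' B).IsSymm := Matrix.isSymm_toBilin'_iff_isSymm.2 hB
  have hnd : (Matrix.toBilin' B).SeparatingLeft :=
    (LinearMap.BilinForm.nondegenerate_toBilin'_of_det_ne_zero' B hdet).1
  obtain ⟨x, hxp, hx0, hx⟩ := exists_isotropic_mem_orthogonal hQ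
    (fun _ ↦ hp.pos_of_mem_span) hpos ((finrank_span_pair_le_two p.1 p.2).trans_lt hWp) hw
  have hx_mem : x ∈ closure (orbitCone Γ l) :=
    mem_closure_orbitCone_of_isotropic
      (fun P hP ↦ hΓ P (transpose_mul_mul_eq_of_isometry hq hP)) hq hQ hnd
      (exists_orthogonal_self_ne_zero hQ hpos (by omega)) hx hx0 hl
  obtain ⟨z, hxz⟩ := exists_apply_ne_zero hnd hx0
  refine closure_mono ?_ (mem_closure_orthogonal_pairs hQ (isOpen_setOf_spansPosPlane hQ) hp hx_mem
    hxz (hxp _ (Submodule.mem_span_of_mem (by simp))) (hxp _ (Submodule.mem_span_of_mem (by simp))))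
  rintro p' ⟨hp', _, ⟨c, hc, γ, hγ, rfl⟩, h₁, h₂⟩
  simp only [map_smul, smul_eq_mul, mul_eq_zero, hc, false_or] at h₁ h₂
  exact ⟨hp', γ, hγ, h₁, h₂⟩

/-- **Anan'in–Verbitsky, Proposition 3.2.** Let `V = ℝⁿ` carry a
nondegenerate symmetric bilinear form of signature `(s₊, s₋)` with `s₊ ≥ 3`,
`s₋ ≥ 1`, integral on the lattice `L = ℤⁿ`, let `Γ` be a finite-index subgroup of
`O(L)`, and `l ∈ L` a nonzero vector.  Then `⋃_{γ ∈ Γ} Gr₊₊((γl)^⊥)` is dense in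
the Grassmannian `Gr₊₊(V)` of positive 2-planes (stated here at the level of
spanning pairs of vectors). -/
theorem dense_positive_planes_orthogonal_to_orbit
    (B : Matrix (Fin n) (Fin n) ℝ) (hB : B.IsSymm) (hdet : B.det ≠ 0)
    (hint : ∀ v w : Fin n → ℤ, ∃ k : ℤ, qForm B (intVec v) (intVec w) = (k : ℝ))
    (sp sm : ℕ) (hsp : 3 ≤ sp) (hsm : 1 ≤ sm) (hsum : sp + sm = n)
    (Wp Wm : Submodule ℝ (Fin n → ℝ))
    (hWp : Module.finrank ℝ Wp = sp) (hWm : Module.finrank ℝ Wm = sm)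
    (hspan : Wp ⊔ Wm = ⊤)
    (hpos : ∀ x ∈ Wp, x ≠ 0 → 0 < qForm B x x)
    (hneg : ∀ x ∈ Wm, x ≠ 0 → qForm B x x < 0)
    (O Γ : Subgroup (Matrix (Fin n) (Fin n) ℤ)ˣ)
    (hO : ∀ P : (Matrix (Fin n) (Fin n) ℤ)ˣ, P ∈ O ↔
      ((P : Matrix (Fin n) (Fin n) ℤ).map (Int.cast : ℤ → ℝ))ᵀ * B *
        ((P : Matrix (Fin n) (Fin n) ℤ).map (Int.cast : ℤ → ℝ)) = B)
    (hΓO : Γ ≤ O) (hfin : (Γ.subgroupOf O).index ≠ 0)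
    (l : Fin n → ℤ) (hl : l ≠ 0) :
    ∀ p : (Fin n → ℝ) × (Fin n → ℝ), SpansPosPlane B p →
      p ∈ closure {p' : (Fin n → ℝ) × (Fin n → ℝ) | SpansPosPlane B p' ∧
        ∃ P ∈ Γ, qForm B p'.1 (intVec ((P : Matrix (Fin n) (Fin n) ℤ).mulVec l)) = 0 ∧
          qForm B p'.2 (intVec ((P : Matrix (Fin n) (Fin n) ℤ).mulVec l)) = 0} := by
  have hneg' : ∃ w, qForm B w w < 0 := by
    have hWm0 : Wm ≠ ⊥ := by
      rintro rfl
      rw [finrank_bot] at hWm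
      omega
    obtain ⟨w, hw, hw0⟩ := Submodule.exists_mem_ne_zero_of_ne_bot hWm0
    exact ⟨w, hneg w hw hw0⟩
  have hΓ (P : (Matrix (Fin n) (Fin n) ℤ)ˣ) (hP : P ∈ O) : ∃ m, 0 < m ∧ P ^ m ∈ Γ := by
    obtain ⟨m, hm, -, hmem⟩ := Subgroup.exists_pow_mem_of_relIndex_ne_zero hfin hP
    exact ⟨m, hm, hmem.1⟩
  simp only [intVec_mulVec]
  exact dense_positive_planes_orthogonal_to_orbit_general B hB hdet hint Wp (hWp ▸ hsp) hpos hneg' Γ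
    (fun P hP ↦ hΓ P ((hO P).2 hP)) (intVec l) (intVec_ne_zero hl)
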